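/- Let G be a simple graph on n ≥ 2 vertices and m edges with Laplacian eigenvalues μ₁ ≥ … ≥ μₙ, let 1 ≤ k ≤ n, and set t = μ₁/n. Then S_k(G) = Σ_{i=1}^{k} μᵢ ≤ n·t + √((k − 1)·(2m²/(n − 1) + m·n + n²·t(1 − t))). -/

import Mathlib

/-!
Write `d` for the degrees. Since `n t = μ₁`, Cauchy–Schwarz bounds `S_k - μ₁` by
`√((k - 1)(∑ μᵢ² - μ₁²))`, so it suffices that `∑ μᵢ² ≤ 2m²/(n-1) + mn + nμ₁`.

By the trace of `L²`, `∑ μᵢ² = ∑ d_u² + 2m`, and `2m = ∑ μᵢ ≤ nμ₁`. It remains to show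
`∑ d_u² ≤ 2m²/(n-1) + mn`, a weak form of de Caen's inequality. With `T_u = ∑_{v ~ u} d_v`, the
bounds `T_u ≤ (n-1) d_u` and `T_u ≤ 2m - d_u`, weighted by `n-1-d_u` and `d_u`, give
`(n-1)(T_u + d_u²) ≤ 2m d_u + (n-1)² d_u`; summing over `u` and using `∑ T_u = ∑ d_u²` concludes.
-/

open Finset

theorem sum_sq_eigenvalues_eq_trace {n : ℕ} {A : Matrix (Fin n) (Fin n) ℝ} (hA : A.IsHermitian) :
    ∑ i, hA.eigenvalues i ^ 2 = (A * A).trace := by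
  have h : A * A = Unitary.conjStarAlgAut ℝ _ hA.eigenvectorUnitary
      (Matrix.diagonal hA.eigenvalues * Matrix.diagonal hA.eigenvalues) := by
    rw [map_mul]
    have := hA.spectral_theorem
    simp only [RCLike.ofReal_real_eq_id, Function.id_comp] at this
    rw [← this]
  rw [h, Unitary.conjStarAlgAut_apply, Matrix.trace_mul_cycle]
  simp [Matrix.trace, pow_two]

theorem trace_lapMatrix {n : ℕ} (G : SimpleGraph (Fin n)) [DecidableRel G.Adj] :
    (G.lapMatrix ℝ).trace = ∑ u, (G.degree u : ℝ) := by
  simp [Matrix.trace, SimpleGraph.lapMatrix, SimpleGraph.degMatrix]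

theorem sum_adjMatrix_row {n : ℕ} (G : SimpleGraph (Fin n)) [DecidableRel G.Adj] (u : Fin n) :
    ∑ v, G.adjMatrix ℝ u v = G.degree u := by
  simp [SimpleGraph.adjMatrix_apply, ← G.card_neighborFinset_eq_degree,
    SimpleGraph.neighborFinset_eq_filter]

theorem trace_lapMatrix_sq {n : ℕ} (G : SimpleGraph (Fin n)) [DecidableRel G.Adj] :
    (G.lapMatrix ℝ * G.lapMatrix ℝ).trace
      = ∑ u, (G.degree u : ℝ) ^ 2 + ∑ u, (G.degree u : ℝ) := by
  rw [Matrix.trace, ← Finset.sum_add_distrib]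
  refine Finset.sum_congr rfl fun u _ => ?_
  have h : ∀ v, G.lapMatrix ℝ u v * G.lapMatrix ℝ v u
      = (if u = v then (G.degree u : ℝ) ^ 2 else 0) + G.adjMatrix ℝ u v := by
    intro v
    by_cases huv : u = v
    · subst huv
      simp [SimpleGraph.lapMatrix, SimpleGraph.degMatrix, pow_two]
    · simp [SimpleGraph.lapMatrix, SimpleGraph.degMatrix, Matrix.diagonal, huv, Ne.symm huv,
        SimpleGraph.adjMatrix_apply, G.adj_comm v u]
      split_ifs <;> norm_num
  simp only [Matrix.diag_apply, Matrix.mul_apply, h, Finset.sum_add_distrib, sum_adjMatrix_row]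
  simp

/-- A weak form of de Caen's inequality: `∑ d² ≤ 2m²/(n-1) + m(n-1)`, with denominators cleared and
`2m` written as the sum of the degrees. -/
theorem sum_sq_degree_le {n : ℕ} (G : SimpleGraph (Fin n)) [DecidableRel G.Adj] :
    2 * ((n : ℝ) - 1) * ∑ u, (G.degree u : ℝ) ^ 2
      ≤ (∑ u, (G.degree u : ℝ)) ^ 2 + ((n : ℝ) - 1) ^ 2 * ∑ u, (G.degree u : ℝ) := by
  set d : Fin n → ℝ := fun u => (G.degree u : ℝ) with hd
  set M : ℝ := ∑ u, d u with hM
  have hdn : ∀ u, d u ≤ n - 1 := by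
    intro u
    have h := G.degree_lt_card_verts u
    rw [Fintype.card_fin] at h
    have h' : ((G.degree u + 1 : ℕ) : ℝ) ≤ n := by exact_mod_cast h
    push_cast at h'
    simp only [hd]
    linarith
  have hd0 : ∀ u, 0 ≤ d u := fun u => Nat.cast_nonneg _
  have hA0 : ∀ u v, 0 ≤ G.adjMatrix ℝ u v := by
    intro u v
    rw [SimpleGraph.adjMatrix_apply]
    split_ifs <;> norm_num
  -- `T u` is the sum of the degrees of the neighbours of `u`.
  set T : Fin n → ℝ := fun u => ∑ v, G.adjMatrix ℝ u v * d v with hT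
  have hT1 : ∀ u, T u ≤ (n - 1) * d u := by
    intro u
    have : ((n : ℝ) - 1) * d u = ∑ v, G.adjMatrix ℝ u v * (n - 1) := by
      rw [← Finset.sum_mul, sum_adjMatrix_row, mul_comm]
    rw [this]
    exact Finset.sum_le_sum fun v _ => mul_le_mul_of_nonneg_left (hdn v) (hA0 u v)
  have hT2 : ∀ u, T u + d u ≤ M := by
    intro u
    have : T u + d u = ∑ v, (G.adjMatrix ℝ u v * d v + if u = v then d v else 0) := by
      rw [Finset.sum_add_distrib]
      simp [hT]
    rw [this, hM]
    refine Finset.sum_le_sum fun v _ => ?_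
    by_cases huv : u = v
    · subst huv
      simp
    · rw [if_neg huv, SimpleGraph.adjMatrix_apply]
      have := hd0 v
      split_ifs <;> linarith
  have hTsum : ∑ u, T u = ∑ u, d u ^ 2 := by
    simp only [hT]
    rw [Finset.sum_comm]
    refine Finset.sum_congr rfl fun v _ => ?_
    rw [← Finset.sum_mul, pow_two]
    congr 1
    refine Eq.trans ?_ (sum_adjMatrix_row G v)
    exact Finset.sum_congr rfl fun u _ => by simp [SimpleGraph.adjMatrix_apply, G.adj_comm]
  have key : ∀ u, ((n : ℝ) - 1) * (T u + d u ^ 2) ≤ M * d u + (n - 1) ^ 2 * d u := by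
    intro u
    nlinarith [mul_le_mul_of_nonneg_left (hT1 u) (sub_nonneg.2 (hdn u)),
      mul_le_mul_of_nonneg_left (hT2 u) (hd0 u), sq_nonneg (d u)]
  have := Finset.sum_le_sum fun u (_ : u ∈ Finset.univ) => key u
  rw [← Finset.mul_sum, Finset.sum_add_distrib, Finset.sum_add_distrib, hTsum, ← Finset.mul_sum,
    ← Finset.mul_sum, ← hM] at this
  linarith

/-- For a simple graph `G` on `n ≥ 2` vertices and `m` edges with Laplacian eigenvalues
`μ₁ ≥ … ≥ μₙ`, `1 ≤ k ≤ n`, and `t = μ₁ / n`, one has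
`S_k(G) = ∑_{i=1}^{k} μᵢ ≤ n t + √((k − 1)(2 m²/(n − 1) + m n + n² t (1 − t)))`. -/
theorem statement6 {n m k : ℕ} (hn : 2 ≤ n) (G : SimpleGraph (Fin n)) [DecidableRel G.Adj]
    (hm : G.edgeFinset.card = m)
    (hL : (G.lapMatrix ℝ).IsHermitian)
    (μ : ℕ → ℝ)
    (hμeig : ∃ e : Fin n ≃ Fin n, ∀ j : Fin n, μ ((j : ℕ) + 1) = hL.eigenvalues (e j))
    (hμdec : ∀ i j : ℕ, 1 ≤ i → i ≤ j → j ≤ n → μ j ≤ μ i)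
    (hk1 : 1 ≤ k) (hkn : k ≤ n)
    (t : ℝ) (ht : t = μ 1 / n) :
    ∑ i ∈ Finset.Icc 1 k, μ i
      ≤ n * t + Real.sqrt ((k - 1) *
          (2 * (m : ℝ) ^ 2 / ((n : ℝ) - 1) + m * n + n ^ 2 * t * (1 - t))) := by
  obtain ⟨e, he⟩ := hμeig
  have hn' : (2 : ℝ) ≤ n := by exact_mod_cast hn
  -- Sums over all eigenvalues do not depend on the enumeration `e`.
  have hsum : ∀ f : ℝ → ℝ, ∑ i ∈ Finset.Icc 1 n, f (μ i) = ∑ i, f (hL.eigenvalues i) := by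
    intro f
    rw [← Equiv.sum_comp e, ← Finset.Ico_add_one_right_eq_Icc, Finset.sum_Ico_eq_sum_range,
      Finset.sum_range]
    exact Finset.sum_congr rfl fun j _ => by rw [← he j, add_comm]
  have hdeg : ∑ u, (G.degree u : ℝ) = 2 * m := by
    have := G.sum_degrees_eq_twice_card_edges
    rw [hm] at this
    exact_mod_cast this
  have h1 : ∑ i ∈ Finset.Icc 1 n, μ i = 2 * m := by
    have h := hL.trace_eq_sum_eigenvalues
    rw [trace_lapMatrix, hdeg] at h
    rw [hsum fun x => x]
    simpa using h.symm
  have h2 : ∑ i ∈ Finset.Icc 1 n, μ i ^ 2 = ∑ u, (G.degree u : ℝ) ^ 2 + 2 * m := by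
    rw [hsum fun x => x ^ 2, sum_sq_eigenvalues_eq_trace, trace_lapMatrix_sq, hdeg]
  have hmax : 2 * (m : ℝ) ≤ n * μ 1 := by
    rw [← h1]
    calc ∑ i ∈ Finset.Icc 1 n, μ i ≤ ∑ i ∈ Finset.Icc 1 n, μ 1 :=
          Finset.sum_le_sum fun i hi =>
            hμdec 1 i le_rfl (Finset.mem_Icc.1 hi).1 (Finset.mem_Icc.1 hi).2
      _ = n * μ 1 := by simp
  have hdC : ∑ u, (G.degree u : ℝ) ^ 2 ≤ 2 * (m : ℝ) ^ 2 / ((n : ℝ) - 1) + m * n := by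
    have h := sum_sq_degree_le G
    rw [hdeg] at h
    have hpos : (0 : ℝ) < n - 1 := by linarith
    have hm0 : (0 : ℝ) ≤ m := Nat.cast_nonneg m
    rw [div_add' _ _ _ hpos.ne', le_div_iff₀ hpos]
    nlinarith [mul_nonneg hm0 hpos.le]
  have hnt : n * t = μ 1 := by
    rw [ht]
    field_simp
  have hsplit : ∀ (f : ℕ → ℝ) (j : ℕ), 1 ≤ j →
      ∑ i ∈ Finset.Icc 1 j, f i = f 1 + ∑ i ∈ Finset.Ioc 1 j, f i :=
    fun f j hj => (Finset.add_sum_Ioc_eq_sum_Icc hj).symm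
  have hquad : (n : ℝ) ^ 2 * t * (1 - t) = n * μ 1 - μ 1 ^ 2 := by
    rw [← hnt]
    ring
  rw [hsplit _ _ hk1, hnt, hquad]
  gcongr
  apply Real.le_sqrt_of_sq_le
  have hcard : ((#(Finset.Ioc 1 k) : ℕ) : ℝ) = k - 1 := by
    rw [Nat.card_Ioc, Nat.cast_sub hk1, Nat.cast_one]
  have hk0 : (0 : ℝ) ≤ k - 1 := hcard ▸ Nat.cast_nonneg _
  calc (∑ i ∈ Finset.Ioc 1 k, μ i) ^ 2
      ≤ (k - 1) * ∑ i ∈ Finset.Ioc 1 k, μ i ^ 2 := hcard ▸ sq_sum_le_card_mul_sum_sq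
    _ ≤ (k - 1) * ∑ i ∈ Finset.Ioc 1 n, μ i ^ 2 := by
        refine mul_le_mul_of_nonneg_left ?_ hk0
        exact Finset.sum_le_sum_of_subset_of_nonneg (Finset.Ioc_subset_Ioc_right hkn)
          fun i _ _ => sq_nonneg _
    _ ≤ _ := by
        refine mul_le_mul_of_nonneg_left ?_ hk0
        have := hsplit (fun i => μ i ^ 2) n (by omega)
        linarith
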